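/- Let R be a *-regular ring. The set of projections of R, ordered by e ≤ f ⟺ f e = e, is a modular ortholattice with least element 0, greatest element 1, and orthocomplementation e ↦ 1 − e; in particular any two projections have a meet and a join among projections, the order is a partial order, e ↦ 1 − e is an order-reversing involution, and e ∧ (1−e) = 0, e ∨ (1−e) = 1. -/

import Mathlib

/-- An ortholattice: a bounded lattice with an order-reversing involution `x ↦ x′`
satisfying `x ⊓ x′ = ⊥` and `x ⊔ x′ = ⊤`. -/
class Ortholattice (α : Type*) extends Lattice α, BoundedOrder α where
  compl : α → α
  compl_antitone : ∀ x y : α, x ≤ y → compl y ≤ compl x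
  compl_compl : ∀ x : α, compl (compl x) = x
  inf_compl : ∀ x : α, x ⊓ compl x = ⊥
  sup_compl : ∀ x : α, x ⊔ compl x = ⊤

postfix:max "′" => Ortholattice.compl

/-- A `*`-regular ring: a unital `*`-ring in which `x * x* = 0` implies `x = 0` and which
is von Neumann regular. -/
class StarRegularRing (R : Type*) [Ring R] [StarRing R] : Prop where
  eq_zero_of_mul_star_self : ∀ x : R, x * star x = 0 → x = 0
  regular : ∀ a : R, ∃ x : R, a * x * a = a

theorem range_proj {R : Type*} [Ring R] [StarRing R] [StarRegularRing R] (a : R) :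
    ∃ p y : R, p * p = p ∧ star p = p ∧ p * a = a ∧ p = a * y := by
  obtain ⟨x, hx⟩ := StarRegularRing.regular (star a * a)
  have h0 : ∀ d : R, star d * d = 0 → d = 0 := by
    intro d hd
    have := StarRegularRing.eq_zero_of_mul_star_self (star d) (by rwa [star_star])
    simpa using this
  have hpa : a * x * star a * a = a := by
    rw [← sub_eq_zero]
    apply h0
    have h1 : star a * (a * x * star a * a - a) = 0 := by
      rw [mul_sub, sub_eq_zero]
      simpa only [mul_assoc] using hx
    have h2 : a * x * star a * a - a = a * (x * star a * a - 1) := by noncomm_ring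
    nth_rewrite 1 [h2]
    rw [star_mul, mul_assoc, h1, mul_zero]
  have hpp : (a * x * star a) * star (a * x * star a) = star (a * x * star a) := by
    have : star (a * x * star a) = a * (star x * star a) := by
      simp only [star_mul, star_star]
    rw [this, ← mul_assoc, hpa]
  have hs : star (a * x * star a) = a * x * star a := by
    have := congrArg star hpp
    rw [star_mul, star_star, hpp] at this
    exact this
  refine ⟨a * x * star a, x * star a, ?_, hs, hpa, by rw [mul_assoc]⟩
  rw [hs] at hpp
  exact hpp

theorem join_exists {R : Type*} [Ring R] [StarRing R] [StarRegularRing R]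
    (e f : {e : R // e * e = e ∧ star e = e}) :
    ∃ s : {e : R // e * e = e ∧ star e = e}, (s : R) * e = e ∧ (s : R) * f = f ∧
      ∃ a b : R, (s : R) = e * a + f * b := by
  obtain ⟨e, he, he'⟩ := e
  obtain ⟨f, hf, hf'⟩ := f
  obtain ⟨g, y, hg, hg', hga, hgy⟩ := range_proj ((1 - e) * f)
  have heg : e * g = 0 := by
    rw [hgy, ← mul_assoc, ← mul_assoc, mul_sub, he]; simp
  have hge : g * e = 0 := by
    have := congrArg star heg
    rwa [star_mul, he', hg', star_zero] at this
  have hgf : g * f = f - e * f := by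
    have : g * ((1 - e) * f) = g * f - g * e * f := by noncomm_ring
    rw [hga, hge] at this
    simpa [sub_mul] using this.symm
  refine ⟨⟨e + g, ?_, by rw [star_add, he', hg']⟩, ?_, ?_, 1 - f * y, y, ?_⟩
  · rw [add_mul, mul_add, mul_add, he, hg, heg, hge]; simp
  · simp [add_mul, he, hge]
  · simp [add_mul, hgf]
  · simp only
    rw [hgy]; noncomm_ring

theorem proj_swap {R : Type*} [Ring R] [StarRing R]
    {e f : {e : R // e * e = e ∧ star e = e}} (h : (f : R) * e = e) : (e : R) * f = e := by
  have := congrArg star h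
  rwa [star_mul, e.2.2, f.2.2] at this

def projCompl {R : Type*} [Ring R] [StarRing R]
    (e : {e : R // e * e = e ∧ star e = e}) : {e : R // e * e = e ∧ star e = e} :=
  ⟨1 - e, by rw [mul_sub, sub_mul, sub_mul, e.2.1]; simp, by rw [star_sub, star_one, e.2.2]⟩

noncomputable def projSup {R : Type*} [Ring R] [StarRing R] [StarRegularRing R]
    (e f : {e : R // e * e = e ∧ star e = e}) : {e : R // e * e = e ∧ star e = e} :=
  (join_exists e f).choose

noncomputable def projInf {R : Type*} [Ring R] [StarRing R] [StarRegularRing R]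
    (e f : {e : R // e * e = e ∧ star e = e}) : {e : R // e * e = e ∧ star e = e} :=
  projCompl (projSup (projCompl e) (projCompl f))

section
variable {R : Type*} [Ring R] [StarRing R] [StarRegularRing R]
  (e f : {e : R // e * e = e ∧ star e = e})

theorem projSup_left : (projSup e f : R) * e = e := (join_exists e f).choose_spec.1
theorem projSup_right : (projSup e f : R) * f = f := (join_exists e f).choose_spec.2.1
theorem projSup_mem : ∃ a b : R, (projSup e f : R) = e * a + f * b :=
  (join_exists e f).choose_spec.2.2

theorem projInf_mul (t : R) (h1 : (e : R) * t = t) (h2 : (f : R) * t = t) :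
    (projInf e f : R) * t = t := by
  obtain ⟨a, b, h⟩ := projSup_mem (projCompl e) (projCompl f)
  have h3 := congrArg star h
  rw [(projSup (projCompl e) (projCompl f)).2.2, star_add, star_mul, star_mul,
    (projCompl e).2.2, (projCompl f).2.2] at h3
  have h4 : (projCompl e : R) * t = 0 := by simp [projCompl, sub_mul, h1]
  have h5 : (projCompl f : R) * t = 0 := by simp [projCompl, sub_mul, h2]
  change (1 - (projSup (projCompl e) (projCompl f) : R)) * t = t
  rw [sub_mul, h3, add_mul, mul_assoc, mul_assoc, h4, h5]; simp

theorem projCompl_anti (h : (f : R) * e = e) :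
    (projCompl e : R) * projCompl f = projCompl f := by
  have := proj_swap h
  simp [projCompl, mul_sub, sub_mul, this]

theorem projCompl_projCompl : projCompl (projCompl e) = e := by
  ext; simp [projCompl]

theorem projInf_left : (e : R) * projInf e f = projInf e f := by
  have := projCompl_anti _ _ (projSup_left (projCompl e) (projCompl f))
  rwa [projCompl_projCompl] at this

theorem projInf_right : (f : R) * projInf e f = projInf e f := by
  have := projCompl_anti _ _ (projSup_right (projCompl e) (projCompl f))
  rwa [projCompl_projCompl] at this

theorem projSup_least (h : R) (h1 : h * e = e) (h2 : h * f = f) :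
    h * projSup e f = projSup e f := by
  obtain ⟨a, b, hs⟩ := projSup_mem e f
  rw [hs, mul_add, ← mul_assoc, ← mul_assoc, h1, h2]
end

noncomputable def projOrtholattice (R : Type*) [Ring R] [StarRing R] [StarRegularRing R] :
    Ortholattice {e : R // e * e = e ∧ star e = e} where
  le e f := (f : R) * e = e
  le_refl e := e.2.1
  le_trans a b c hab hbc := by
    change (b : R) * a = a at hab
    change (c : R) * b = b at hbc
    change (c : R) * a = a
    rw [← hab, ← mul_assoc, hbc]
  le_antisymm a b hab hba := by
    have h := proj_swap hab
    ext
    exact h.symm.trans hba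
  sup := projSup
  inf := projInf
  le_sup_left := projSup_left
  le_sup_right := projSup_right
  sup_le a b c h1 h2 := projSup_least a b c h1 h2
  inf_le_left := projInf_left
  inf_le_right := projInf_right
  le_inf a b c h1 h2 := projInf_mul b c a h1 h2
  bot := ⟨0, by simp, by simp⟩
  top := ⟨1, by simp, by simp⟩
  bot_le a := mul_zero _
  le_top a := one_mul _
  compl := projCompl
  compl_antitone a b h := projCompl_anti a b h
  compl_compl := projCompl_projCompl
  inf_compl e := by
    ext
    change (projInf e (projCompl e) : R) = 0
    have h1 := projInf_left e (projCompl e)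
    have h2 := projInf_right e (projCompl e)
    have h3 : (projCompl e : R) = 1 - e := rfl
    rw [h3, sub_mul, h1] at h2
    simpa using h2.symm
  sup_compl e := by
    ext
    change (projSup e (projCompl e) : R) = 1
    have h1 := projSup_left e (projCompl e)
    have h2 := projSup_right e (projCompl e)
    have h3 : (projCompl e : R) = 1 - e := rfl
    rw [h3, mul_sub, h1] at h2
    simpa using h2

/-- The projections of a `*`-regular ring, ordered by `e ≤ f ↔ f * e = e`, form a modular
ortholattice with least element `0`, greatest element `1` and orthocomplementation
`e ↦ 1 - e`. -/
theorem stmt17 (R : Type*) [Ring R] [StarRing R] [StarRegularRing R] :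
    ∃ inst : Ortholattice {e : R // e * e = e ∧ star e = e},
      letI := inst
      (∀ e f : {e : R // e * e = e ∧ star e = e}, e ≤ f ↔ (f : R) * (e : R) = (e : R)) ∧
      IsModularLattice {e : R // e * e = e ∧ star e = e} ∧
      ((⊥ : {e : R // e * e = e ∧ star e = e}) : R) = 0 ∧
      ((⊤ : {e : R // e * e = e ∧ star e = e}) : R) = 1 ∧
      (∀ e : {e : R // e * e = e ∧ star e = e}, ((e′ : {e : R // e * e = e ∧ star e = e}) : R) = 1 - (e : R)) := by
  refine ⟨projOrtholattice R, fun e f => Iff.rfl, ?_, rfl, rfl, fun e => rfl⟩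
  letI := projOrtholattice R
  refine ⟨?_⟩
  intro x y z hxz
  change (z : R) * x = x at hxz
  change (projSup x (projInf y z) : R) * (projInf (projSup x y) z) = projInf (projSup x y) z
  have h1 := projInf_left (projSup x y) z
  have h2 := projInf_right (projSup x y) z
  generalize (projInf (projSup x y) z : R) = w at h1 h2
  obtain ⟨a, b, hs⟩ := projSup_mem x y
  rw [hs, add_mul] at h1
  have h3 : (y : R) * b * w = w - x * a * w := eq_sub_of_add_eq' h1
  have h4 : (projInf y z : R) * (y * b * w) = y * b * w := by
    apply projInf_mul
    · rw [← mul_assoc, ← mul_assoc, y.2.1]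
    · rw [h3, mul_sub, h2, ← mul_assoc, ← mul_assoc, hxz]
  have h5 : (projSup x (projInf y z) : R) * (y * b * w) = y * b * w := by
    rw [← h4, ← mul_assoc, projSup_right]
  have h6 : (projSup x (projInf y z) : R) * (x * a * w) = x * a * w := by
    rw [← mul_assoc, ← mul_assoc, projSup_left]
  rw [← h1, mul_add, h5, h6]
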